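/- Let a, b_1, b_2, c be real numbers with c > a > 0, and let x ∈ (0,1). Then sgn(D_a (F(a,b_1,c,x) / F(a,b_2,c,x))) = sgn(b_1 − b_2), where D_a denotes the derivative with respect to the parameter a of the ratio of the two hypergeometric functions. -/

import Mathlib

/-- The rising factorial (Pochhammer symbol): `(y)_j = y(y+1)⋯(y+j-1)`, `(y)_0 = 1`. -/
noncomputable def risingFactorial (y : ℝ) : ℕ → ℝ
  | 0 => 1
  | m + 1 => risingFactorial y m * (y + m)

/-- The Gaussian hypergeometric function
`F(a,b,c,x) = ∑_{j≥0} (a)_j (b)_j / ((c)_j j!) xʲ`. -/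
noncomputable def hypF (a b c x : ℝ) : ℝ :=
  ∑' j : ℕ, risingFactorial a j * risingFactorial b j /
    (risingFactorial c j * (Nat.factorial j : ℝ)) * x ^ j

open MeasureTheory Set Filter Topology

lemma rf_eq (y : ℝ) (n : ℕ) : risingFactorial y n = (ascPochhammer ℝ n).eval y := by
  induction n with
  | zero => simp [risingFactorial]
  | succ n ih => rw [risingFactorial, ih, ascPochhammer_succ_eval]

lemma rf_pos {y : ℝ} (hy : 0 < y) (n : ℕ) : 0 < risingFactorial y n := by
  induction n with
  | zero => simp [risingFactorial]
  | succ n ih => rw [risingFactorial]; positivity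

lemma choose_rf (b : ℝ) (n : ℕ) :
    Ring.choose (b + n - 1) n = risingFactorial b n / (n.factorial : ℝ) := by
  have h := Ring.factorial_nsmul_multichoose_eq_ascPochhammer b n
  rw [Polynomial.ascPochhammer_smeval_eq_eval, ← rf_eq, Ring.multichoose_eq] at h
  rw [← h]
  have : (n.factorial : ℝ) ≠ 0 := by positivity
  rw [nsmul_eq_mul]
  field_simp

lemma binom_hasSum (b y : ℝ) (hy : |y| < 1) :
    HasSum (fun n : ℕ => risingFactorial b n / (n.factorial : ℝ) * y ^ n) ((1 - y) ^ (-b)) := by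
  have h := (Real.one_div_one_sub_rpow_hasFPowerSeriesOnBall_zero b).hasSum (y := y)
    (by simpa [← ofReal_norm] using hy)
  have h1 : 0 ≤ 1 - y := by linarith [abs_lt.1 hy]
  simpa [choose_rf, Real.rpow_neg h1, mul_comm] using h

lemma beta_integrable {α β : ℝ} (hα : 0 < α) (hβ : 0 < β) :
    IntegrableOn (fun t : ℝ => t ^ (α - 1) * (1 - t) ^ (β - 1)) (Ioo 0 1) := by
  have h := Complex.betaIntegral_convergent (u := α) (v := β) (by simpa) (by simpa)
  rw [intervalIntegrable_iff_integrableOn_Ioo_of_le (by simp)] at h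
  refine (h.re).congr ?_
  refine ae_restrict_of_forall_mem measurableSet_Ioo (fun t ht ↦ ?_)
  simp only
  norm_cast
  rw [← Complex.ofReal_cpow ht.1.le, ← Complex.ofReal_cpow (by linarith [ht.2])]
  norm_cast

lemma beta_integral {α β : ℝ} (hα : 0 < α) (hβ : 0 < β) :
    ∫ t in Ioo (0 : ℝ) 1, t ^ (α - 1) * (1 - t) ^ (β - 1) = ProbabilityTheory.beta α β := by
  rw [ProbabilityTheory.beta_eq_betaIntegralReal α β hα hβ, Complex.betaIntegral,
    intervalIntegral.integral_of_le (by norm_num), integral_Ioc_eq_integral_Ioo,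
    ← RCLike.re_to_complex, ← integral_re]
  · refine setIntegral_congr_fun measurableSet_Ioo fun t ht ↦ ?_
    norm_cast
    rw [← Complex.ofReal_cpow ht.1.le, ← Complex.ofReal_cpow (by linarith [ht.2])]
    norm_cast
  · have h := Complex.betaIntegral_convergent (u := α) (v := β) (by simpa) (by simpa)
    rwa [intervalIntegrable_iff_integrableOn_Ioo_of_le (by simp)] at h

lemma beta_shift {α β : ℝ} (hα : 0 < α) (hβ : 0 < β) (n : ℕ) :
    ProbabilityTheory.beta (α + n) β =
      ProbabilityTheory.beta α β * (risingFactorial α n / risingFactorial (α + β) n) := by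
  induction n with
  | zero => simp [risingFactorial]
  | succ n ih =>
    have h1 := (rf_pos (add_pos hα hβ) n).ne'
    have e : ProbabilityTheory.beta (α + (n + 1 : ℕ)) β =
        ProbabilityTheory.beta (α + n) β * ((α + n) / (α + β + n)) := by
      have g1 := Real.Gamma_add_one (s := α + n) (by positivity)
      have g2 := Real.Gamma_add_one (s := α + β + n) (by positivity)
      have g3 := Real.Gamma_pos_of_pos (s := α + β + n) (by positivity)
      unfold ProbabilityTheory.beta
      rw [show α + ((n + 1 : ℕ) : ℝ) = α + n + 1 by push_cast; ring,
        show α + n + 1 + β = α + β + n + 1 by ring, show α + n + β = α + β + n by ring, g1, g2]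
      field_simp
    rw [e, ih, risingFactorial, risingFactorial]
    field_simp

/-- Euler integral -/
noncomputable def eulerN (a b c x : ℝ) : ℝ :=
  ∫ t in Ioo (0 : ℝ) 1, t ^ (a - 1) * (1 - t) ^ (c - a - 1) * (1 - x * t) ^ (-b)

lemma euler {a c x : ℝ} (b : ℝ) (ha : 0 < a) (hac : a < c) (hx : x ∈ Ioo (0 : ℝ) 1) :
    eulerN a b c x = ProbabilityTheory.beta a (c - a) * hypF a b c x := by
  have hca : 0 < c - a := by linarith
  let w : ℝ → ℝ := fun t => t ^ (a - 1) * (1 - t) ^ (c - a - 1)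
  let k : ℕ → ℝ := fun n => risingFactorial b n / (n.factorial : ℝ) * x ^ n
  have hw : IntegrableOn w (Ioo 0 1) := beta_integrable ha hca
  have hw0 : ∀ t ∈ Ioo (0 : ℝ) 1, 0 ≤ w t := fun t ht => by
    have := ht.1
    have : 0 < 1 - t := by linarith [ht.2]
    simp only [w]; positivity
  have hk : Summable (fun n => |k n|) :=
    (binom_hasSum b x (by rw [abs_of_pos hx.1]; exact hx.2)).summable.abs
  have key := hasSum_integral_of_dominated_convergence (μ := volume.restrict (Ioo (0 : ℝ) 1))
    (F := fun n t => k n * (t ^ (a + n - 1) * (1 - t) ^ (c - a - 1)))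
    (f := fun t => t ^ (a - 1) * (1 - t) ^ (c - a - 1) * (1 - x * t) ^ (-b))
    (fun n t => |k n| * w t)
    (fun n => Measurable.aestronglyMeasurable (by fun_prop))
    (fun n => ae_restrict_of_forall_mem measurableSet_Ioo (fun t ht ↦ by
      have h1 : 0 < 1 - t := by linarith [ht.2]
      have h0 := ht.1
      rw [norm_mul, Real.norm_eq_abs, Real.norm_of_nonneg (by positivity)]
      refine mul_le_mul_of_nonneg_left ?_ (abs_nonneg _)
      refine mul_le_mul_of_nonneg_right ?_ (by positivity)
      exact Real.rpow_le_rpow_of_exponent_ge h0 ht.2.le (by linarith [n.cast_nonneg (α := ℝ)])))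
    (ae_of_all _ fun t => hk.mul_right _)
    (by simp_rw [tsum_mul_right]; exact hw.const_mul _)
    (ae_restrict_of_forall_mem measurableSet_Ioo (fun t ht ↦ by
      have hxt : |x * t| < 1 := by
        rw [abs_of_pos (mul_pos hx.1 ht.1)]; nlinarith [hx.1, hx.2, ht.1, ht.2]
      have h := (binom_hasSum b (x * t) hxt).mul_left (w t)
      have h2 : 0 < 1 - t := by linarith [ht.2]
      convert! h using 1
      ext n
      have e : t ^ (a + n - 1) = t ^ (a - 1) * t ^ n := by
        rw [← Real.rpow_natCast, ← Real.rpow_add ht.1]; congr 1; ring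
      simp only [w, k, e, mul_pow]
      ring))
  have h2 := key.tsum_eq
  rw [eulerN, ← h2, hypF, ← tsum_mul_left]
  congr 1
  ext n
  rw [integral_const_mul, beta_integral (by positivity) hca, beta_shift ha hca]
  simp only [k]
  rw [show a + (c - a) = c by ring]
  have := (rf_pos (ha.trans hac) n).ne'
  field_simp

lemma neg_log_le {t ε : ℝ} (ht : 0 < t) (hε : 0 < ε) : -Real.log t ≤ t ^ (-ε) / ε := by
  have := Real.log_le_rpow_div (x := t⁻¹) (by positivity) hε
  rwa [Real.log_inv, Real.inv_rpow ht.le, ← Real.rpow_neg ht.le] at this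

noncomputable def eW (a b c x t : ℝ) : ℝ :=
  t ^ (a - 1) * (1 - t) ^ (c - a - 1) * (1 - x * t) ^ (-b)

noncomputable def eL (t : ℝ) : ℝ := Real.log t - Real.log (1 - t)

lemma eL_bound {t ε : ℝ} (ht : t ∈ Ioo (0 : ℝ) 1) (hε : 0 < ε) :
    |eL t| ≤ 2 / ε * (t ^ (-ε) * (1 - t) ^ (-ε)) := by
  have h0 := ht.1
  have h1 : 0 < 1 - t := by linarith [ht.2]
  have l1 := Real.log_neg ht.1 ht.2
  have l2 := Real.log_neg h1 (by linarith)
  have b1 := neg_log_le h0 hε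
  have b2 := neg_log_le h1 hε
  have p1 : 1 ≤ t ^ (-ε) := Real.one_le_rpow_of_pos_of_le_one_of_nonpos h0 ht.2.le (by linarith)
  have p2 : 1 ≤ (1 - t) ^ (-ε) :=
    Real.one_le_rpow_of_pos_of_le_one_of_nonpos h1 (by linarith) (by linarith)
  have : |eL t| ≤ -Real.log t + -Real.log (1 - t) := by
    rw [eL, abs_le]; constructor <;> linarith
  refine this.trans ((add_le_add b1 b2).trans ?_)
  rw [← add_div, div_mul_eq_mul_div]
  gcongr
  nlinarith

lemma eW_pos {a b c x t : ℝ} (hx : x ∈ Ioo (0 : ℝ) 1) (ht : t ∈ Ioo (0 : ℝ) 1) :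
    0 < eW a b c x t := by
  have h0 := ht.1
  have h1 : 0 < 1 - t := by linarith [ht.2]
  have h2 : 0 < 1 - x * t := by nlinarith [hx.1, hx.2, ht.1, ht.2]
  unfold eW; positivity

lemma third_bound {x : ℝ} (b : ℝ) (hx : x ∈ Ioo (0 : ℝ) 1) :
    ∃ C, ∀ t ∈ Ioo (0 : ℝ) 1, (1 - x * t) ^ (-b) ≤ C := by
  obtain ⟨C, hC⟩ := (isCompact_Icc (a := (0 : ℝ)) (b := 1)).exists_bound_of_continuousOn
    (f := fun t : ℝ => (1 - x * t) ^ (-b)) (by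
      refine ContinuousOn.rpow_const (by fun_prop) fun t ht => Or.inl ?_
      have : 0 < 1 - x * t := by nlinarith [hx.1, hx.2, ht.1, ht.2]
      exact this.ne')
  exact ⟨C, fun t ht => (le_abs_self _).trans (hC t (Ioo_subset_Icc_self ht))⟩

lemma eW_integrable {a c x : ℝ} (b : ℝ) (ha : 0 < a) (hac : a < c) (hx : x ∈ Ioo (0 : ℝ) 1) :
    IntegrableOn (eW a b c x) (Ioo 0 1) := by
  obtain ⟨C, hC⟩ := third_bound b hx
  refine Integrable.mono' ((beta_integrable ha (sub_pos.2 hac)).const_mul C)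
    (Measurable.aestronglyMeasurable (by unfold eW; fun_prop)) ?_
  refine ae_restrict_of_forall_mem measurableSet_Ioo fun t ht => ?_
  rw [Real.norm_of_nonneg (eW_pos hx ht).le, eW, mul_comm]
  have h0 := ht.1
  have h1 : 0 < 1 - t := by linarith [ht.2]
  exact mul_le_mul_of_nonneg_right (hC t ht) (by positivity)

lemma eulerN_deriv {a c x : ℝ} (b : ℝ) (ha : 0 < a) (hac : a < c) (hx : x ∈ Ioo (0 : ℝ) 1) :
    IntegrableOn (fun t => eW a b c x t * eL t) (Ioo 0 1) ∧
    HasDerivAt (fun a' => eulerN a' b c x) (∫ t in Ioo (0 : ℝ) 1, eW a b c x t * eL t) a := by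
  obtain ⟨C, hC⟩ := third_bound b hx
  obtain ⟨ε, hε, hε1, hε2⟩ : ∃ ε > 0, 2 * ε < a ∧ 2 * ε < c - a := by
    refine ⟨min a (c - a) / 4, ?_, ?_, ?_⟩
    · have : 0 < min a (c - a) := lt_min ha (by linarith)
      positivity
    · have := min_le_left a (c - a); linarith
    · have := min_le_right a (c - a); linarith
  refine hasDerivAt_integral_of_dominated_loc_of_deriv_le (μ := volume.restrict (Ioo (0 : ℝ) 1))
    (F := fun a' t => eW a' b c x t) (F' := fun a' t => eW a' b c x t * eL t)
    (s := Ioo (a - ε) (a + ε))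
    (bound := fun t => (2 / ε * C) * (t ^ ((a - 2 * ε) - 1) * (1 - t) ^ ((c - a - 2 * ε) - 1)))
    (Ioo_mem_nhds (by linarith) (by linarith))
    (Eventually.of_forall fun a' => Measurable.aestronglyMeasurable (by unfold eW; fun_prop))
    (eW_integrable b ha hac hx)
    (Measurable.aestronglyMeasurable (by unfold eW eL; fun_prop))
    ?_ ((beta_integrable (by linarith) (by linarith)).const_mul _) ?_
  · refine ae_restrict_of_forall_mem measurableSet_Ioo fun t ht a' ha' => ?_
    have h0 := ht.1
    have h1 : 0 < 1 - t := by linarith [ht.2]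
    have h2 : 0 < 1 - x * t := by nlinarith [hx.1, hx.2, ht.1, ht.2]
    have hC' := hC t ht
    rw [norm_mul, Real.norm_of_nonneg (eW_pos hx ht).le, Real.norm_eq_abs]
    have e1 : t ^ ((a - 2 * ε) - 1) = t ^ (-ε) * t ^ (a - ε - 1) := by
      rw [← Real.rpow_add h0]; congr 1; ring
    have e2 : (1 - t) ^ ((c - a - 2 * ε) - 1) = (1 - t) ^ (-ε) * (1 - t) ^ (c - a - ε - 1) := by
      rw [← Real.rpow_add h1]; congr 1; ring
    have i1 : t ^ (a' - 1) ≤ t ^ (a - ε - 1) :=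
      Real.rpow_le_rpow_of_exponent_ge h0 ht.2.le (by linarith [ha'.1])
    have i2 : (1 - t) ^ (c - a' - 1) ≤ (1 - t) ^ (c - a - ε - 1) :=
      Real.rpow_le_rpow_of_exponent_ge h1 (by linarith) (by linarith [ha'.2])
    rw [e1, e2]
    calc eW a' b c x t * |eL t|
        ≤ (t ^ (a - ε - 1) * (1 - t) ^ (c - a - ε - 1) * C) *
          (2 / ε * (t ^ (-ε) * (1 - t) ^ (-ε))) := by
          have hC0 : 0 ≤ C := (Real.rpow_pos_of_pos h2 _).le.trans hC'
          unfold eW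
          gcongr
          exact eL_bound ht hε
      _ = _ := by ring
  · refine ae_restrict_of_forall_mem measurableSet_Ioo fun t ht a' ha' => ?_
    have h0 := ht.1
    have h1 : 0 < 1 - t := by linarith [ht.2]
    have d1 : HasDerivAt (fun a' : ℝ => t ^ (a' - 1)) (Real.log t * 1 * t ^ (a' - 1)) a' :=
      ((hasDerivAt_id a').sub_const 1).const_rpow h0
    have d2 : HasDerivAt (fun a' : ℝ => (1 - t) ^ (c - a' - 1))
        (Real.log (1 - t) * (-1) * (1 - t) ^ (c - a' - 1)) a' :=
      (((hasDerivAt_id a').const_sub c).sub_const 1).const_rpow h1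
    have := (d1.mul d2).mul_const ((1 - x * t) ^ (-b))
    convert! this using 1
    unfold eW eL
    ring

lemma eulerN_pos {a c x : ℝ} (b : ℝ) (ha : 0 < a) (hac : a < c) (hx : x ∈ Ioo (0 : ℝ) 1) :
    0 < eulerN a b c x := by
  change 0 < ∫ t in Ioo (0 : ℝ) 1, eW a b c x t
  rw [setIntegral_pos_iff_support_of_nonneg_ae
    (ae_restrict_of_forall_mem measurableSet_Ioo fun t ht => (eW_pos hx ht).le)
    (eW_integrable b ha hac hx)]
  have : Function.support (eW a b c x) ∩ Ioo 0 1 = Ioo 0 1 :=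
    inter_eq_right.2 fun t ht => (eW_pos hx ht).ne'
  simp [this]

lemma eL_lt {s t : ℝ} (hs : 0 < s) (ht : t < 1) (h : s < t) : eL s < eL t := by
  have h1 := Real.log_lt_log hs h
  have h2 := Real.log_lt_log (x := 1 - t) (y := 1 - s) (by linarith) (by linarith)
  unfold eL; linarith

lemma key_ineq {a b₁ b₂ c x : ℝ} (ha : 0 < a) (hac : a < c) (hx : x ∈ Ioo (0 : ℝ) 1)
    (hb : b₂ < b₁) :
    eulerN a b₁ c x * (∫ t in Ioo (0 : ℝ) 1, eW a b₂ c x t * eL t) <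
    (∫ t in Ioo (0 : ℝ) 1, eW a b₁ c x t * eL t) * eulerN a b₂ c x := by
  have N2 := eulerN_pos b₂ ha hac hx
  obtain ⟨I1, -⟩ := eulerN_deriv b₁ ha hac hx
  obtain ⟨I2, -⟩ := eulerN_deriv b₂ ha hac hx
  have J1 := eW_integrable b₁ ha hac hx
  have J2 := eW_integrable b₂ ha hac hx
  set A1 := ∫ t in Ioo (0 : ℝ) 1, eW a b₁ c x t * eL t
  set A2 := ∫ t in Ioo (0 : ℝ) 1, eW a b₂ c x t * eL t
  set m := A2 / eulerN a b₂ c x with hm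
  have hm' : A2 = m * eulerN a b₂ c x := by rw [hm]; field_simp
  obtain ⟨t0, ht0, hL0⟩ : ∃ t0 ∈ Ioo (0 : ℝ) 1, eL t0 = m := by
    have he := Real.exp_pos m
    refine ⟨Real.exp m / (1 + Real.exp m), ⟨by positivity, ?_⟩, ?_⟩
    · rw [div_lt_one (by positivity)]; linarith
    · have : 1 - Real.exp m / (1 + Real.exp m) = 1 / (1 + Real.exp m) := by field_simp; ring
      rw [eL, this, Real.log_div (by positivity) (by positivity),
        Real.log_div (by positivity) (by positivity)]
      simp
  let h : ℝ → ℝ := fun t => (1 - x * t) ^ (-(b₁ - b₂))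
  have hlt : ∀ s t : ℝ, 0 < s → t < 1 → s < t → h s < h t := fun s t hs ht hst => by
    apply Real.rpow_lt_rpow_of_neg
    · nlinarith [hx.1, hx.2]
    · nlinarith [hx.1, hx.2]
    · linarith
  have hW : ∀ t ∈ Ioo (0 : ℝ) 1, eW a b₁ c x t = h t * eW a b₂ c x t := fun t ht => by
    have h2 : 0 < 1 - x * t := by nlinarith [hx.1, hx.2, ht.1, ht.2]
    have : (1 - x * t) ^ (-b₁) = (1 - x * t) ^ (-(b₁ - b₂)) * (1 - x * t) ^ (-b₂) := by
      rw [← Real.rpow_add h2]; congr 1; ring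
    simp only [eW, h, this]; ring
  let g : ℝ → ℝ := fun t => (eW a b₁ c x t * eL t - m * eW a b₁ c x t) -
    h t0 * (eW a b₂ c x t * eL t - m * eW a b₂ c x t)
  have hg : IntegrableOn g (Ioo 0 1) :=
    (I1.sub (J1.const_mul m)).sub ((I2.sub (J2.const_mul m)).const_mul _)
  have hgpos : ∀ t ∈ Ioo (0 : ℝ) 1, t ≠ t0 → 0 < g t := fun t ht hne => by
    have e : g t = (eL t - eL t0) * (h t - h t0) * eW a b₂ c x t := by
      simp only [g, hW t ht, hL0]; ring
    rw [e]
    refine mul_pos ?_ (eW_pos hx ht)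
    rcases lt_or_gt_of_ne hne with hl | hl
    · exact mul_pos_of_neg_of_neg (sub_neg.2 (eL_lt ht.1 ht0.2 hl))
        (sub_neg.2 (hlt _ _ ht.1 ht0.2 hl))
    · exact mul_pos (sub_pos.2 (eL_lt ht0.1 ht.2 hl)) (sub_pos.2 (hlt _ _ ht0.1 ht.2 hl))
  have hgt0 : g t0 = 0 := by simp only [g, hW t0 ht0, hL0]; ring
  have hpos : 0 < ∫ t in Ioo (0 : ℝ) 1, g t := by
    rw [setIntegral_pos_iff_support_of_nonneg_ae
      (ae_restrict_of_forall_mem measurableSet_Ioo fun t ht => ?_) hg]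
    · refine lt_of_lt_of_le ?_ (measure_mono (μ := volume) (s := Ioo 0 t0) fun t ht => ?_)
      · simpa using ht0.1
      · have : t ∈ Ioo (0 : ℝ) 1 := ⟨ht.1, ht.2.trans ht0.2⟩
        exact ⟨(hgpos t this ht.2.ne).ne', this⟩
    · by_cases e : t = t0
      · rw [e, hgt0]; rfl
      · exact (hgpos t ht e).le
  have hint : ∫ t in Ioo (0 : ℝ) 1, g t =
      (A1 - m * eulerN a b₁ c x) - h t0 * (A2 - m * eulerN a b₂ c x) := by
    simp only [g]
    have K1 : IntegrableOn (fun t => eW a b₁ c x t * eL t - m * eW a b₁ c x t) (Ioo 0 1) :=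
      I1.sub (J1.const_mul m)
    have K2 : IntegrableOn (fun t => h t0 * (eW a b₂ c x t * eL t - m * eW a b₂ c x t))
        (Ioo 0 1) := (I2.sub (J2.const_mul m)).const_mul _
    rw [integral_sub K1 K2, integral_sub I1 (J1.const_mul m), integral_const_mul,
      integral_const_mul, integral_sub I2 (J2.const_mul m), integral_const_mul]
    rfl
  rw [hint, hm', sub_self, mul_zero, sub_zero] at hpos
  rw [hm']
  nlinarith

/-- For `c > a > 0` and `0 < x < 1`,
`sgn(D_a (F(a,b₁,c,x)/F(a,b₂,c,x))) = sgn(b₁ - b₂)`. -/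
theorem stmt13 (a b₁ b₂ c x : ℝ) (ha : 0 < a) (hac : a < c)
    (hx : x ∈ Set.Ioo (0 : ℝ) 1) :
    Real.sign (deriv (fun a' : ℝ => hypF a' b₁ c x / hypF a' b₂ c x) a) =
      Real.sign (b₁ - b₂) := by
  obtain ⟨-, D1⟩ := eulerN_deriv b₁ ha hac hx
  obtain ⟨-, D2⟩ := eulerN_deriv b₂ ha hac hx
  have N2 := eulerN_pos b₂ ha hac hx
  have hev : (fun a' : ℝ => hypF a' b₁ c x / hypF a' b₂ c x) =ᶠ[𝓝 a]
      fun a' => eulerN a' b₁ c x / eulerN a' b₂ c x := by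
    filter_upwards [Ioo_mem_nhds ha hac] with a' h
    have := ProbabilityTheory.beta_pos h.1 (sub_pos.2 h.2)
    rw [euler b₁ h.1 h.2 hx, euler b₂ h.1 h.2 hx, mul_div_mul_left _ _ this.ne']
  rw [hev.deriv_eq, (D1.fun_div D2 N2.ne').deriv]
  rcases lt_trichotomy b₁ b₂ with hb | hb | hb
  · have k := key_ineq ha hac hx hb
    rw [Real.sign_of_neg (sub_neg.2 hb), Real.sign_of_neg]
    exact div_neg_of_neg_of_pos (by linarith) (by positivity)
  · subst hb
    simp [mul_comm]
  · have k := key_ineq ha hac hx hb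
    rw [Real.sign_of_pos (sub_pos.2 hb), Real.sign_of_pos]
    exact div_pos (by linarith) (by positivity)
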